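/- Canonical symmetric solution of the untwisted reflection equation: for every (ℓ, r, σ) ∈ Σ^sym_N and λ, μ ∈ ℂ^×, the matrix-valued function K(u) = I + ((u−u^{-1})/(λ^{-1}μ^{-1} + u^{-1})) · ( Σ_{1≤i≤ℓ} E_{ii} + (1/(λ − μu)) Σ_{ℓ<i≤r} ( λ E_{ii} + λ^{-1} E_{σ(i),σ(i)} − E_{i,σ(i)} − E_{σ(i),i} ) ) satisfies the untwisted reflection equation (RE) for all u, v for which all factors are defined. -/

import Mathlib

/-!
Write vectors of `ℂ^N ⊗ ℂ^N` as functions `ψ` of two indices. Up to scalars that occur on both sides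
of the reflection equation, `R(x/y)` maps `ψ` to `α(i,j) ψ(i,j) + β(i,j) ψ(j,i)`, with coefficients
that depend only on whether `i < j`, `i = j` or `i > j` (`RBJ_apply`), and `K(u)` has in row `i`
nonzero entries at most in the columns `i` and `σ(i)`, with values that depend only on the kind of
`i`: at most `ℓ`, lower or upper point of a two-element `σ`-orbit, or a remaining fixed point
(`Ksym_apply`). All these coefficients become polynomials after clearing denominators.

Hence both sides of the equation at `(i,j)` involve `ψ` only on the union of the orbits of `i` and
`j`, a set of at most four points, and depend only on the order and kinds of these points. Since `σ`
reverses the order of the points it moves, two distinct two-element orbits are nested, the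
fixed points `i ≤ ℓ` lie below them and the other fixed points lie inside them. Each of these
configurations yields an identity of polynomials in `q, λ, μ, u, v`, linear in the values of `ψ`
(the lemmas `localRE_*`), and `localRE_all` collects them.
-/

open Matrix
open scoped Kronecker

noncomputable section

/-- 1-based matrix unit `E_{a b}` in the `N × N` complex matrices. -/
def Em (N : ℕ) (a b : ℕ) : Matrix (Fin N) (Fin N) ℂ :=
  Matrix.of fun i j => if (i : ℕ) + 1 = a ∧ (j : ℕ) + 1 = b then 1 else 0

/-- The flip (permutation) operator `P = Σ_{i,j} E_{ij} ⊗ E_{ji}`. -/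
def Pmat (N : ℕ) : Matrix (Fin N × Fin N) (Fin N × Fin N) ℂ :=
  ∑ i ∈ Finset.Icc 1 N, ∑ j ∈ Finset.Icc 1 N, Em N i j ⊗ₖ Em N j i

/-- The constant R-matrix `R_q`. -/
def Rconst (N : ℕ) (q : ℂ) : Matrix (Fin N × Fin N) (Fin N × Fin N) ℂ :=
  (∑ i ∈ Finset.Icc 1 N, ∑ j ∈ Finset.Icc 1 N,
      (if i = j then q else 1) • (Em N i i ⊗ₖ Em N j j))
    + ∑ i ∈ Finset.Icc 1 N, ∑ j ∈ Finset.Icc 1 N,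
        (if i < j then q - q⁻¹ else 0) • (Em N i j ⊗ₖ Em N j i)

/-- `f_q(u) = 1/(q - q⁻¹ u)`. -/
def fBJ (q u : ℂ) : ℂ := (q - q⁻¹ * u)⁻¹

/-- The Bazhanov–Jimbo R-matrix `R(u) = f_q(u) R_q + f_{q⁻¹}(u⁻¹) P R_{q⁻¹} P`. -/
def RBJ (N : ℕ) (q u : ℂ) : Matrix (Fin N × Fin N) (Fin N × Fin N) ℂ :=
  fBJ q u • Rconst N q + fBJ q⁻¹ u⁻¹ • (Pmat N * Rconst N q⁻¹ * Pmat N)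

/-- `X1 = X ⊗ I`. -/
def M1 (N : ℕ) (X : Matrix (Fin N) (Fin N) ℂ) : Matrix (Fin N × Fin N) (Fin N × Fin N) ℂ :=
  X ⊗ₖ (1 : Matrix (Fin N) (Fin N) ℂ)

/-- `X2 = I ⊗ X`. -/
def M2 (N : ℕ) (X : Matrix (Fin N) (Fin N) ℂ) : Matrix (Fin N × Fin N) (Fin N × Fin N) ℂ :=
  (1 : Matrix (Fin N) (Fin N) ℂ) ⊗ₖ X

/-- `R21(u) = P R(u) P`. -/
def R21 (N : ℕ) (q u : ℂ) : Matrix (Fin N × Fin N) (Fin N × Fin N) ℂ :=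
  Pmat N * RBJ N q u * Pmat N

/-- Transposition in the first tensor factor. -/
def t1 (N : ℕ) (X : Matrix (Fin N × Fin N) (Fin N × Fin N) ℂ) :
    Matrix (Fin N × Fin N) (Fin N × Fin N) ℂ :=
  Matrix.of fun p r => X (r.1, p.2) (p.1, r.2)

/-- The charge conjugation matrix `C = Σ_i (-q)^i E_{ī i}` where `ī = N+1-i`. -/
def Cmat (N : ℕ) (q : ℂ) : Matrix (Fin N) (Fin N) ℂ :=
  ∑ i ∈ Finset.Icc 1 N, (-q) ^ i • Em N (N + 1 - i) i

/-- The C-conjugated R-matrix `R^∨(u) = C2⁻¹ R^{t1}(q̃² u⁻¹) C2` with `q̃ = s^N`. -/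
def Rvee (N : ℕ) (q s u : ℂ) : Matrix (Fin N × Fin N) (Fin N × Fin N) ℂ :=
  (M2 N (Cmat N q))⁻¹ * t1 N (RBJ N q ((s ^ N) ^ 2 * u⁻¹)) * M2 N (Cmat N q)

/-- `R^∨21(u) = P R^∨(u) P`. -/
def Rvee21 (N : ℕ) (q s u : ℂ) : Matrix (Fin N × Fin N) (Fin N × Fin N) ℂ :=
  Pmat N * Rvee N q s u * Pmat N

/-- The untwisted reflection equation at spectral parameters `(u, v)`. -/
def REeq (N : ℕ) (q : ℂ) (K : ℂ → Matrix (Fin N) (Fin N) ℂ) (u v : ℂ) : Prop :=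
  R21 N q (u / v) * M1 N (K u) * RBJ N q (u * v) * M2 N (K v)
    = M2 N (K v) * R21 N q (u * v) * M1 N (K u) * RBJ N q (u / v)

/-- `K` satisfies the untwisted reflection equation (RE) for all `u, v`
for which all factors are defined. -/
def IsRESol (N : ℕ) (q : ℂ) (K : ℂ → Matrix (Fin N) (Fin N) ℂ) : Prop :=
  ∀ u v : ℂ, u ≠ 0 → v ≠ 0 → u / v ≠ q ^ 2 → u / v ≠ q⁻¹ ^ 2 →
    u * v ≠ q ^ 2 → u * v ≠ q⁻¹ ^ 2 → REeq N q K u v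

/-- The cross-conjugated twisted reflection equation at `(u, v)`. -/
def CtREeq (N : ℕ) (q s : ℂ) (K : ℂ → Matrix (Fin N) (Fin N) ℂ) (u v : ℂ) : Prop :=
  R21 N q (u / v) * M1 N (K u) * Rvee N q s (u * v) * M2 N (K v)
    = M2 N (K v) * Rvee21 N q s (u * v) * M1 N (K u) * RBJ N q (u / v)

/-- `K` satisfies the cross-conjugated twisted reflection equation (CtRE) for all
`u, v` for which all factors are defined. -/
def IsCtRESol (N : ℕ) (q s : ℂ) (K : ℂ → Matrix (Fin N) (Fin N) ℂ) : Prop :=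
  ∀ u v : ℂ, u ≠ 0 → v ≠ 0 → u / v ≠ q ^ 2 → u / v ≠ q⁻¹ ^ 2 →
    (s ^ N) ^ 2 * (u * v)⁻¹ ≠ q ^ 2 → (s ^ N) ^ 2 * (u * v)⁻¹ ≠ q⁻¹ ^ 2 →
    CtREeq N q s K u v

/-- Transposition across the antidiagonal: `(M^w)_{ij} = M_{N+1-j, N+1-i}`. -/
def wT (N : ℕ) (M : Matrix (Fin N) (Fin N) ℂ) : Matrix (Fin N) (Fin N) ℂ :=
  Matrix.of fun i j => M (Fin.rev j) (Fin.rev i)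

/-- The involution `σ` of `{1, …, N}` attached to `(ℓ, r) ∈ Σ^sym_N`. -/
def sigSym (N ℓ r i : ℕ) : ℕ :=
  if (ℓ < i ∧ i ≤ r) ∨ (N + ℓ + 1 - r ≤ i ∧ i ≤ N) then N + ℓ + 1 - i else i

/-- The canonical symmetric solution
`K(u) = I + ((u-u⁻¹)/(λ⁻¹μ⁻¹+u⁻¹)) ( Σ_{1≤i≤ℓ} E_{ii}
  + (1/(λ-μu)) Σ_{ℓ<i≤r} ( λ E_{ii} + λ⁻¹ E_{σ(i),σ(i)} - E_{i,σ(i)} - E_{σ(i),i} ) )`. -/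
def Ksym (N ℓ r : ℕ) (lam mu : ℂ) (u : ℂ) : Matrix (Fin N) (Fin N) ℂ :=
  1 + ((u - u⁻¹) / (lam⁻¹ * mu⁻¹ + u⁻¹)) •
    ((∑ i ∈ Finset.Icc 1 ℓ, Em N i i)
      + (lam - mu * u)⁻¹ •
          ∑ i ∈ Finset.Icc (ℓ + 1) r,
            (lam • Em N i i + lam⁻¹ • Em N (sigSym N ℓ r i) (sigSym N ℓ r i)
              - Em N i (sigSym N ℓ r i) - Em N (sigSym N ℓ r i) i))

/-! ### The local form of the equation -/

/-- The four kinds of indices: `D` for `i ≤ ℓ` (fixed by `σ`, with a diagonal term), `L` for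
`ℓ < i ≤ r` (lower point of a two-element `σ`-orbit), `H` for the upper points
`N + ℓ - r < i ≤ N` of these orbits, and `M` for the fixed points in between, where `K` acts as
the identity. -/
inductive Kind | D | L | M | H

/-- Diagonal entry, at an index of the given kind, of the rescaled matrix
`(u + λ μ) (λ - μ u) K(u)`, whose entries are polynomials. -/
def kDiag (lam mu u : ℂ) : Kind → ℂ
  | .D => u * (1 + lam * mu * u) * (lam - mu * u)
  | .L => (u + lam * mu) * (lam - mu * u) + lam ^ 2 * mu * (u ^ 2 - 1)
  | .M => (u + lam * mu) * (lam - mu * u)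
  | .H => (u + lam * mu) * (lam - mu * u) + mu * (u ^ 2 - 1)

/-- Entry at `(i, σ(i))` of `(u + λ μ) (λ - μ u) K(u)` for `i` of the given kind. It is set to `0`
at the fixed points of `σ`, so that row `i` is always the sum of a diagonal contribution `kDiag`
and a contribution `kOff` in column `σ(i)`. -/
def kOff (lam mu u : ℂ) : Kind → ℂ
  | .D => 0
  | .L => -(lam * mu * (u ^ 2 - 1))
  | .M => 0
  | .H => -(lam * mu * (u ^ 2 - 1))

section Local

variable {ι : Type*} [LinearOrder ι]

/-- Coefficient of `E_{ii} ⊗ E_{jj}` in `R(x/y)`, divided by `f_q(x/y) / (q y)` so that it becomes a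
polynomial in `q, x, y`. -/
def rDiag (q x y : ℂ) (i j : ι) : ℂ := if i = j then q ^ 2 * y - x else q * (y - x)

/-- Coefficient of `E_{ij} ⊗ E_{ji}`, `i ≠ j`, in `R(x/y)`, divided by `f_q(x/y) / (q y)`. -/
def rOff (q x y : ℂ) (i j : ι) : ℂ :=
  if i = j then 0 else if i < j then (q ^ 2 - 1) * y else (q ^ 2 - 1) * x

/-- The rescaled `R(x/y)` acting on vectors, viewed as functions `ψ` of two indices. -/
def opR (q x y : ℂ) (ψ : ι → ι → ℂ) (i j : ι) : ℂ :=
  rDiag q x y i j * ψ i j + rOff q x y i j * ψ j i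

/-- The rescaled `R21(x/y)` acting on functions of two indices. -/
def opR21 (q x y : ℂ) (ψ : ι → ι → ℂ) (i j : ι) : ℂ :=
  rDiag q x y i j * ψ i j + rOff q x y j i * ψ j i

/-- The rescaled `K(u) ⊗ I` acting on functions of two indices; `c` gives the kind of an index. -/
def opK1 (lam mu u : ℂ) (c : ι → Kind) (σ : ι → ι) (ψ : ι → ι → ℂ) (i j : ι) : ℂ :=
  kDiag lam mu u (c i) * ψ i j + kOff lam mu u (c i) * ψ (σ i) j

/-- The rescaled `I ⊗ K(u)` acting on functions of two indices. -/
def opK2 (lam mu u : ℂ) (c : ι → Kind) (σ : ι → ι) (ψ : ι → ι → ℂ) (i j : ι) : ℂ :=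
  kDiag lam mu u (c j) * ψ i j + kOff lam mu u (c j) * ψ i (σ j)

/-- The reflection equation for the rescaled operators, applied to `ψ` and evaluated at the pair
of indices `(i, j)`. Only values of `ψ` on the `σ`-orbits of `i` and `j` occur in it. -/
def LocalRE (q lam mu u v : ℂ) (c : ι → Kind) (σ : ι → ι) (ψ : ι → ι → ℂ) (i j : ι) : Prop :=
  opR21 q u v (opK1 lam mu u c σ (opR q (u * v) 1 (opK2 lam mu v c σ ψ))) i j
    = opK2 lam mu v c σ (opR21 q (u * v) 1 (opK1 lam mu u c σ (opR q u v ψ))) i j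

variable {q lam mu u v : ℂ} {c : ι → Kind} {σ : ι → ι} {ψ : ι → ι → ℂ}

lemma localRE_fixed_same {x : ι} (hx : kOff lam mu u (c x) = 0) (hx' : kOff lam mu v (c x) = 0) :
    LocalRE q lam mu u v c σ ψ x x := by
  simp only [LocalRE, opR, opR21, opK1, opK2, rDiag, rOff, hx, hx', if_true]
  ring

/-- Two fixed points of `σ`. The order matters: the points of kind `D` lie below those of kind `M`. -/
lemma localRE_fixed {x y : ι} (h : x < y)
    (hc : (c x = .D ∧ c y = .D) ∨ (c x = .M ∧ c y = .M) ∨ (c x = .D ∧ c y = .M)) :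
    LocalRE q lam mu u v c σ ψ x y ∧ LocalRE q lam mu u v c σ ψ y x := by
  rcases hc with ⟨hx, hy⟩ | ⟨hx, hy⟩ | ⟨hx, hy⟩ <;> constructor <;>
  · simp only [LocalRE, opR, opR21, opK1, opK2, rDiag, rOff, hx, hy, kDiag, kOff, h, h.ne, h.ne',
      h.not_gt, if_true, if_false]
    ring

/-- Both indices in the same two-element orbit of `σ`. -/
lemma localRE_pair {w z : ι} (h : w < z) (hw : c w = .L) (hz : c z = .H)
    (sw : σ w = z) (sz : σ z = w) :
    (LocalRE q lam mu u v c σ ψ w w ∧ LocalRE q lam mu u v c σ ψ w z) ∧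
    LocalRE q lam mu u v c σ ψ z w ∧ LocalRE q lam mu u v c σ ψ z z := by
  refine ⟨⟨?_, ?_⟩, ?_, ?_⟩ <;>
  · simp only [LocalRE, opR, opR21, opK1, opK2, rDiag, rOff, hw, hz, sw, sz, kDiag, kOff, h, h.ne,
      h.ne', h.not_gt, if_true, if_false]
    ring

/-- A fixed point of kind `M` lies between the two points of every two-element orbit. -/
lemma localRE_pair_mid {w m z : ι} (h : w < m) (h' : m < z) (hw : c w = .L) (hm : c m = .M)
    (hz : c z = .H) (sw : σ w = z) (sz : σ z = w) :
    (LocalRE q lam mu u v c σ ψ w m ∧ LocalRE q lam mu u v c σ ψ m w) ∧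
    LocalRE q lam mu u v c σ ψ m z ∧ LocalRE q lam mu u v c σ ψ z m := by
  refine ⟨⟨?_, ?_⟩, ?_, ?_⟩ <;>
  · simp only [LocalRE, opR, opR21, opK1, opK2, rDiag, rOff, hw, hm, hz, sw, sz, kDiag, kOff,
      h, h.ne, h.ne', h.not_gt, h', h'.ne, h'.ne', h'.not_gt, if_true, if_false]
    ring

/-- A fixed point of kind `D` lies below both points of every two-element orbit. -/
lemma localRE_pair_low {d w z : ι} (h : d < w) (h' : w < z) (hd : c d = .D) (hw : c w = .L)
    (hz : c z = .H) (sw : σ w = z) (sz : σ z = w) :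
    (LocalRE q lam mu u v c σ ψ d w ∧ LocalRE q lam mu u v c σ ψ w d) ∧
    LocalRE q lam mu u v c σ ψ d z ∧ LocalRE q lam mu u v c σ ψ z d := by
  have h'' := h.trans h'
  refine ⟨⟨?_, ?_⟩, ?_, ?_⟩ <;>
  · simp only [LocalRE, opR, opR21, opK1, opK2, rDiag, rOff, hw, hd, hz, sw, sz, kDiag, kOff,
      h, h.ne, h.ne', h.not_gt, h'', h''.ne, h''.ne', h''.not_gt,
      if_true, if_false]
    ring

/-- Two distinct two-element orbits `{w, z}` and `{x, y}`, which are nested because `σ` reverses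
the order of the points it moves. -/
lemma localRE_nested {w x y z : ι} (h₁ : w < x) (h₂ : x < y) (h₃ : y < z)
    (hw : c w = .L) (hx : c x = .L) (hy : c y = .H) (hz : c z = .H)
    (sw : σ w = z) (sz : σ z = w) (sx : σ x = y) (sy : σ y = x) :
    ((LocalRE q lam mu u v c σ ψ w x ∧ LocalRE q lam mu u v c σ ψ x w) ∧
     LocalRE q lam mu u v c σ ψ w y ∧ LocalRE q lam mu u v c σ ψ y w) ∧
    (LocalRE q lam mu u v c σ ψ z x ∧ LocalRE q lam mu u v c σ ψ x z) ∧
     LocalRE q lam mu u v c σ ψ z y ∧ LocalRE q lam mu u v c σ ψ y z := by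
  have h₄ := h₁.trans h₂
  have h₅ := h₂.trans h₃
  refine ⟨⟨⟨?_, ?_⟩, ?_, ?_⟩, ⟨?_, ?_⟩, ?_, ?_⟩ <;>
  · simp only [LocalRE, opR, opR21, opK1, opK2, rDiag, rOff, hw, hx, hy, hz, sw, sx, sy, sz,
      kDiag, kOff, h₁, h₁.ne, h₁.ne', h₁.not_gt,
      h₃, h₃.ne, h₃.ne', h₃.not_gt, h₄, h₄.ne, h₄.ne', h₄.not_gt, h₅, h₅.ne, h₅.ne', h₅.not_gt,
      if_true, if_false]
    ring

end Local

/-! ### Entries of the `R`-matrix -/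

lemma sum_indicator (S : Finset ℕ) (p : ℕ → Prop) [DecidablePred p] (n₀ : ℕ) (Q : Prop)
    [Decidable Q] (h : ∀ n ∈ S, p n ↔ n = n₀ ∧ Q) :
    ∑ n ∈ S, (if p n then (1 : ℂ) else 0) = if n₀ ∈ S ∧ Q then 1 else 0 := by
  by_cases hQ : Q
  · rw [Finset.sum_congr rfl fun n hn => if_congr ((h n hn).trans (and_iff_left hQ)) rfl rfl]
    simp [hQ]
  · rw [Finset.sum_congr rfl fun n hn => if_neg (fun hp => hQ ((h n hn).1 hp).2)]
    simp [hQ]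

lemma sum_Em_kron (N : ℕ) (g : ℕ → ℕ → ℂ) (p k : Fin N × Fin N) :
    (∑ i ∈ Finset.Icc 1 N, ∑ j ∈ Finset.Icc 1 N, g i j • (Em N i j ⊗ₖ Em N j i)) p k =
      if k = p.swap then g (p.1 + 1) (p.2 + 1) else 0 := by
  obtain ⟨a, b⟩ := p
  obtain ⟨c, d⟩ := k
  simp only [Matrix.sum_apply, Matrix.smul_apply, kroneckerMap_apply, Em, Matrix.of_apply,
    smul_eq_mul, Prod.swap_prod_mk, Prod.mk.injEq]
  rw [Finset.sum_eq_single ((a : ℕ) + 1), Finset.sum_eq_single ((b : ℕ) + 1)]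
  · simp [Fin.ext_iff, ← ite_and]
    grind
  · intro j _ hj
    simp [hj.symm]
  · intro h
    exact absurd (Finset.mem_Icc.2 ⟨by omega, by omega⟩) h
  · intro i _ hi
    simp [hi.symm]
  · intro h
    exact absurd (Finset.mem_Icc.2 ⟨by omega, by omega⟩) h

lemma sum_Em_diag (N : ℕ) (g : ℕ → ℕ → ℂ) (p k : Fin N × Fin N) :
    (∑ i ∈ Finset.Icc 1 N, ∑ j ∈ Finset.Icc 1 N, g i j • (Em N i i ⊗ₖ Em N j j)) p k =
      if k = p then g (p.1 + 1) (p.2 + 1) else 0 := by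
  obtain ⟨a, b⟩ := p
  obtain ⟨c, d⟩ := k
  simp only [Matrix.sum_apply, Matrix.smul_apply, kroneckerMap_apply, Em, Matrix.of_apply,
    smul_eq_mul, Prod.mk.injEq]
  rw [Finset.sum_eq_single ((a : ℕ) + 1), Finset.sum_eq_single ((b : ℕ) + 1)]
  · simp [Fin.ext_iff, ← ite_and]
    exact if_congr and_comm rfl rfl
  · intro j _ hj
    simp [hj.symm]
  · intro h
    exact absurd (Finset.mem_Icc.2 ⟨by omega, by omega⟩) h
  · intro i _ hi
    simp [hi.symm]
  · intro h
    exact absurd (Finset.mem_Icc.2 ⟨by omega, by omega⟩) h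

lemma Pmat_apply (N : ℕ) (p k : Fin N × Fin N) :
    Pmat N p k = if k = p.swap then 1 else 0 := by
  simpa [Pmat] using sum_Em_kron N (fun _ _ => 1) p k

lemma Pmat_conj_apply (N : ℕ) (A : Matrix (Fin N × Fin N) (Fin N × Fin N) ℂ)
    (p k : Fin N × Fin N) : (Pmat N * A * Pmat N) p k = A p.swap k.swap := by
  have h : ∀ x : Fin N × Fin N, k = x.swap ↔ x = k.swap := fun x =>
    ⟨fun h => by rw [h, Prod.swap_swap], fun h => by rw [h, Prod.swap_swap]⟩
  simp [Matrix.mul_apply, Pmat_apply, h]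

lemma Rconst_apply (N : ℕ) (q : ℂ) (p k : Fin N × Fin N) :
    Rconst N q p k = (if k = p then (if p.1 = p.2 then q else 1) else 0) +
      if k = p.swap then (if p.1 < p.2 then q - q⁻¹ else 0) else 0 := by
  rw [Rconst, Matrix.add_apply, sum_Em_kron N (fun i j => if i < j then q - q⁻¹ else 0),
    sum_Em_diag N (fun i j => if i = j then q else 1)]
  simp [Fin.ext_iff]

/-- Away from `x / y = q²` one has `f_{q⁻¹}(y/x) = -(x/y) f_q(x/y)`, so `f_q(x/y)` is a common factor
of all entries of `R(x/y)`. -/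
lemma RBJ_apply (N : ℕ) {q x y : ℂ} (hq : q ≠ 0) (hx : x ≠ 0) (hy : y ≠ 0) (h : x / y ≠ q ^ 2)
    (p k : Fin N × Fin N) :
    RBJ N q (x / y) p k = fBJ q (x / y) / (q * y) *
      ((if k = p then rDiag q x y p.1 p.2 else 0) +
        if k = p.swap then rOff q x y p.1 p.2 else 0) := by
  have h0 : q ^ 2 * y - x ≠ 0 := by
    intro h'
    apply h
    rw [div_eq_iff hy]
    linear_combination -h'
  have e1 : fBJ q (x / y) = q * y / (q ^ 2 * y - x) := by
    rw [fBJ, inv_eq_iff_eq_inv, inv_div]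
    field_simp
  have e2 : fBJ q⁻¹ (x / y)⁻¹ = -(q * x) / (q ^ 2 * y - x) := by
    rw [fBJ, inv_eq_iff_eq_inv, inv_div]
    field_simp
    ring
  have hs : k.swap = p.swap ↔ k = p := Prod.swap_injective.eq_iff
  have hs' : k.swap = p ↔ k = p.swap :=
    ⟨fun h => by rw [← h, Prod.swap_swap], fun h => by rw [h, Prod.swap_swap]⟩
  rw [RBJ, Matrix.add_apply, Matrix.smul_apply, Matrix.smul_apply, Pmat_conj_apply, Rconst_apply,
    Rconst_apply, e1, e2]
  obtain ⟨a, b⟩ := p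
  simp only [Prod.swap_swap, hs, hs', Prod.fst_swap, Prod.snd_swap, smul_eq_mul, rDiag, rOff]
  have hc : q * y / (q ^ 2 * y - x) / (q * y) = 1 / (q ^ 2 * y - x) := by
    field_simp
  rw [hc]
  rcases lt_trichotomy a b with hab | hab | hab
  · simp only [hab, hab.ne, hab.ne', hab.not_gt, if_true, if_false]
    split_ifs <;> field_simp <;> ring
  · simp only [hab, lt_irrefl, if_true, if_false]
    split_ifs <;> field_simp <;> ring
  · simp only [hab, hab.ne, hab.ne', hab.not_gt, if_true, if_false]
    split_ifs <;> field_simp <;> ring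

/-- A matrix whose rows are supported on the diagonal and on the graph of `τ`, applied to a vector. -/
lemma mulVec_of_sparse {X : Type*} [Fintype X] [DecidableEq X] {A : Matrix X X ℂ} {C : ℂ}
    {f g : X → ℂ} {τ : X → X}
    (h : ∀ p k, A p k = C * ((if k = p then f p else 0) + if k = τ p then g p else 0))
    (w : X → ℂ) (p : X) : (A *ᵥ w) p = C * (f p * w p + g p * w (τ p)) := by
  simp [Matrix.mulVec, dotProduct, h, mul_assoc, add_mul, mul_add, Finset.sum_add_distrib]

lemma RBJ_mulVec (N : ℕ) {q x y : ℂ} (hq : q ≠ 0) (hx : x ≠ 0) (hy : y ≠ 0) (h : x / y ≠ q ^ 2)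
    (ψ : Fin N → Fin N → ℂ) :
    RBJ N q (x / y) *ᵥ (fun p => ψ p.1 p.2) =
      fun p => (((fBJ q (x / y) / (q * y)) • opR q x y ψ) p.1 p.2 : ℂ) := by
  ext p
  rw [mulVec_of_sparse (RBJ_apply N hq hx hy h)]
  rfl

lemma R21_mulVec (N : ℕ) {q x y : ℂ} (hq : q ≠ 0) (hx : x ≠ 0) (hy : y ≠ 0) (h : x / y ≠ q ^ 2)
    (ψ : Fin N → Fin N → ℂ) :
    R21 N q (x / y) *ᵥ (fun p => ψ p.1 p.2) =
      fun p => (((fBJ q (x / y) / (q * y)) • opR21 q x y ψ) p.1 p.2 : ℂ) := by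
  ext p
  have hs (k : Fin N × Fin N) : k.swap = p.swap ↔ k = p := Prod.swap_injective.eq_iff
  rw [mulVec_of_sparse (f := fun p => rDiag q x y p.1 p.2) (g := fun p => rOff q x y p.2 p.1)
    (τ := Prod.swap)]
  · rfl
  · intro p k
    rw [R21, Pmat_conj_apply, RBJ_apply N hq hx hy h]
    simp [Prod.swap_injective.eq_iff, Prod.ext_iff, rDiag, eq_comm, and_comm]

/-! ### Entries of the `K`-matrix -/

/-- The kind of an index. Elements of `Fin N` are 0-based: `i : Fin N` stands for `i + 1`. -/
def cls (N ℓ r : ℕ) (i : Fin N) : Kind :=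
  if (i : ℕ) < ℓ then .D else if (i : ℕ) < r then .L
  else if (i : ℕ) < N + ℓ - r then .M else .H

/-- The involution `σ` on 0-based indices; it sends a moved `i` to `N + ℓ - 1 - i`. -/
def sig (N ℓ r : ℕ) (i : Fin N) : Fin N :=
  if h : ℓ ≤ (i : ℕ) ∧ ((i : ℕ) < r ∨ N + ℓ - r ≤ (i : ℕ)) then ⟨N + ℓ - 1 - i, by omega⟩ else i

/-- The sums over `ℓ < n ≤ r` evaluated: `E_{σ(n),σ(n)}` and `E_{σ(n),n}` contribute to row `i` only
when `i` is an upper point of an orbit, the other two terms only when it is a lower point. -/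
lemma Ksym_apply_sums (N ℓ r : ℕ) (hr : 2 * r ≤ N + ℓ) (lam mu u : ℂ)
    (i k : Fin N) :
    Ksym N ℓ r lam mu u i k = (if k = i then 1 else 0) +
      (u - u⁻¹) / (lam⁻¹ * mu⁻¹ + u⁻¹) *
        ((if (i : ℕ) < ℓ ∧ k = i then 1 else 0) + (lam - mu * u)⁻¹ *
          (lam * (if (ℓ ≤ (i : ℕ) ∧ (i : ℕ) < r) ∧ k = i then 1 else 0)
          + lam⁻¹ * (if N + ℓ - r ≤ (i : ℕ) ∧ k = i then 1 else 0)
          - (if (ℓ ≤ (i : ℕ) ∧ (i : ℕ) < r) ∧ (k : ℕ) + i + 1 = N + ℓ then 1 else 0)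
          - (if N + ℓ - r ≤ (i : ℕ) ∧ (k : ℕ) + i + 1 = N + ℓ then 1 else 0))) := by
  have hi := i.2
  have hk := k.2
  have hs : ∀ n ∈ Finset.Icc (ℓ + 1) r, sigSym N ℓ r n = N + ℓ + 1 - n := by
    intro n hn
    rw [Finset.mem_Icc] at hn
    rw [sigSym, if_pos (Or.inl ⟨by omega, by omega⟩)]
  have hG : (∑ n ∈ Finset.Icc (ℓ + 1) r,
      (lam • Em N n n + lam⁻¹ • Em N (sigSym N ℓ r n) (sigSym N ℓ r n)
        - Em N n (sigSym N ℓ r n) - Em N (sigSym N ℓ r n) n)) =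
      ∑ n ∈ Finset.Icc (ℓ + 1) r,
      (lam • Em N n n + lam⁻¹ • Em N (N + ℓ + 1 - n) (N + ℓ + 1 - n)
        - Em N n (N + ℓ + 1 - n) - Em N (N + ℓ + 1 - n) n) :=
    Finset.sum_congr rfl fun n hn => by rw [hs n hn]
  rw [Ksym, hG]
  simp only [Finset.sum_sub_distrib, Finset.sum_add_distrib, ← Finset.smul_sum, Matrix.add_apply,
    Matrix.sub_apply, Matrix.smul_apply, smul_eq_mul, Matrix.sum_apply, Em, Matrix.of_apply]
  rw [sum_indicator (Finset.Icc 1 ℓ) _ (i + 1) (k = i)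
      (fun n hn => by rw [Finset.mem_Icc] at hn; rw [Fin.ext_iff]; omega),
    sum_indicator (Finset.Icc (ℓ + 1) r) _ (i + 1) (k = i)
      (fun n hn => by rw [Finset.mem_Icc] at hn; rw [Fin.ext_iff]; omega),
    sum_indicator (Finset.Icc (ℓ + 1) r) _ (N + ℓ - i) (k = i)
      (fun n hn => by rw [Finset.mem_Icc] at hn; rw [Fin.ext_iff]; omega),
    sum_indicator (Finset.Icc (ℓ + 1) r) _ (i + 1) ((k : ℕ) + i + 1 = N + ℓ)
      (fun n hn => by rw [Finset.mem_Icc] at hn; omega),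
    sum_indicator (Finset.Icc (ℓ + 1) r) _ (N + ℓ - i) ((k : ℕ) + i + 1 = N + ℓ)
      (fun n hn => by rw [Finset.mem_Icc] at hn; omega)]
  have m1 : (i : ℕ) + 1 ∈ Finset.Icc 1 ℓ ↔ (i : ℕ) < ℓ := by rw [Finset.mem_Icc]; omega
  have m2 : (i : ℕ) + 1 ∈ Finset.Icc (ℓ + 1) r ↔ ℓ ≤ (i : ℕ) ∧ (i : ℕ) < r := by
    rw [Finset.mem_Icc]; omega
  have m3 : N + ℓ - (i : ℕ) ∈ Finset.Icc (ℓ + 1) r ↔ N + ℓ - r ≤ (i : ℕ) := by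
    rw [Finset.mem_Icc]; omega
  simp only [m1, m2, m3, Matrix.one_apply, eq_comm (a := i)]

lemma cls_sig_cases (N ℓ r : ℕ) (hr : 2 * r ≤ N + ℓ) (i : Fin N) :
    ((i : ℕ) < ℓ ∧ cls N ℓ r i = .D ∧ sig N ℓ r i = i) ∨
    (ℓ ≤ (i : ℕ) ∧ (i : ℕ) < r ∧ cls N ℓ r i = .L ∧ (sig N ℓ r i : ℕ) + i + 1 = N + ℓ) ∨
    (r ≤ (i : ℕ) ∧ (i : ℕ) < N + ℓ - r ∧ cls N ℓ r i = .M ∧ sig N ℓ r i = i) ∨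
    (N + ℓ - r ≤ (i : ℕ) ∧ cls N ℓ r i = .H ∧ (sig N ℓ r i : ℕ) + i + 1 = N + ℓ) := by
  have hi := i.2
  rcases lt_or_ge (i : ℕ) ℓ with h1 | h1
  · left
    refine ⟨h1, by simp [cls, h1], ?_⟩
    rw [sig, dif_neg (by omega)]
  right
  rcases lt_or_ge (i : ℕ) r with h2 | h2
  · left
    refine ⟨h1, h2, by simp [cls, h1.not_gt, h2], ?_⟩
    rw [sig, dif_pos ⟨h1, Or.inl h2⟩]
    simp only
    omega
  right
  rcases lt_or_ge (i : ℕ) (N + ℓ - r) with h3 | h3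
  · left
    refine ⟨h2, h3, by simp [cls, h1.not_gt, h2.not_gt, h3], ?_⟩
    rw [sig, dif_neg (by omega)]
  · right
    refine ⟨h3, by simp [cls, h1.not_gt, h2.not_gt, h3.not_gt], ?_⟩
    rw [sig, dif_pos ⟨h1, Or.inr h3⟩]
    simp only
    omega

/-- Multiplying `K(u)` by `(u + λ μ) (λ - μ u)` clears all denominators: the prefactor
`(u - u⁻¹) / (λ⁻¹ μ⁻¹ + u⁻¹)` equals `λ μ (u² - 1) / (u + λ μ)`. -/
lemma Ksym_apply (N ℓ r : ℕ) (hlr : ℓ < r) (hr : 2 * r ≤ N + ℓ) {lam mu u : ℂ} (hlam : lam ≠ 0)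
    (hmu : mu ≠ 0) (hu : u ≠ 0) (h1 : lam⁻¹ * mu⁻¹ + u⁻¹ ≠ 0) (h2 : lam - mu * u ≠ 0)
    (i k : Fin N) :
    Ksym N ℓ r lam mu u i k = 1 / ((u + lam * mu) * (lam - mu * u)) *
      ((if k = i then kDiag lam mu u (cls N ℓ r i) else 0) +
        if k = sig N ℓ r i then kOff lam mu u (cls N ℓ r i) else 0) := by
  have hi := i.2
  have hs : u + lam * mu ≠ 0 := by
    intro h
    apply h1
    field_simp
    linear_combination h
  have hc : (u - u⁻¹) / (lam⁻¹ * mu⁻¹ + u⁻¹) = lam * mu * (u ^ 2 - 1) / (u + lam * mu) := by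
    have e : lam⁻¹ * mu⁻¹ + u⁻¹ = (u + lam * mu) / (lam * mu * u) := by
      field_simp
    rw [e]
    field_simp
  rw [Ksym_apply_sums N ℓ r hr, hc]
  rcases cls_sig_cases N ℓ r hr i with ⟨a, hcl, hsg⟩ | ⟨a, b, hcl, hsg⟩ | ⟨a, b, hcl, hsg⟩ |
    ⟨a, hcl, hsg⟩
  · have e1 : ¬ ℓ ≤ (i : ℕ) := by omega
    have e2 : ¬ N + ℓ - r ≤ (i : ℕ) := by omega
    simp only [hcl, hsg, a, e1, e2, true_and, false_and, if_false, kDiag, kOff]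
    split_ifs <;> field_simp <;> ring
  · have e1 : ¬ (i : ℕ) < ℓ := by omega
    have e2 : ¬ N + ℓ - r ≤ (i : ℕ) := by omega
    have e3 : (k : ℕ) + i + 1 = N + ℓ ↔ k = sig N ℓ r i := by rw [Fin.ext_iff]; omega
    simp only [hcl, a, b, e1, e2, e3, true_and, false_and, if_false, kDiag, kOff]
    split_ifs <;> field_simp <;> ring
  · have e1 : ¬ (i : ℕ) < ℓ := by omega
    have e2 : ¬ N + ℓ - r ≤ (i : ℕ) := by omega
    have e3 : ¬ (i : ℕ) < r := by omega
    simp only [hcl, hsg, e1, e2, e3, and_false, false_and, if_false, kDiag, kOff]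
    split_ifs <;> field_simp <;> ring
  · have e1 : ¬ (i : ℕ) < ℓ := by omega
    have e2 : ¬ (i : ℕ) < r := by omega
    have e3 : (k : ℕ) + i + 1 = N + ℓ ↔ k = sig N ℓ r i := by rw [Fin.ext_iff]; omega
    simp only [hcl, a, e1, e2, e3, true_and, and_false, false_and, if_false, kDiag, kOff]
    split_ifs <;> field_simp <;> ring

/-! ### The action on vectors -/

lemma M1_mulVec (N ℓ r : ℕ) (hlr : ℓ < r) (hr : 2 * r ≤ N + ℓ) {lam mu u : ℂ} (hlam : lam ≠ 0)
    (hmu : mu ≠ 0) (hu : u ≠ 0) (h1 : lam⁻¹ * mu⁻¹ + u⁻¹ ≠ 0) (h2 : lam - mu * u ≠ 0)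
    (ψ : Fin N → Fin N → ℂ) :
    M1 N (Ksym N ℓ r lam mu u) *ᵥ (fun p => ψ p.1 p.2) = fun p =>
      (((1 / ((u + lam * mu) * (lam - mu * u))) •
        opK1 lam mu u (cls N ℓ r) (sig N ℓ r) ψ) p.1 p.2 : ℂ) := by
  ext p
  rw [mulVec_of_sparse (f := fun p => kDiag lam mu u (cls N ℓ r p.1))
    (g := fun p => kOff lam mu u (cls N ℓ r p.1)) (τ := fun p => (sig N ℓ r p.1, p.2))
    (C := 1 / ((u + lam * mu) * (lam - mu * u)))]
  · rfl
  · intro p k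
    rw [M1, kroneckerMap_apply, Ksym_apply N ℓ r hlr hr hlam hmu hu h1 h2, Matrix.one_apply]
    by_cases h : p.2 = k.2 <;> simp [Prod.ext_iff, h, eq_comm (a := k.2)]

lemma M2_mulVec (N ℓ r : ℕ) (hlr : ℓ < r) (hr : 2 * r ≤ N + ℓ) {lam mu u : ℂ} (hlam : lam ≠ 0)
    (hmu : mu ≠ 0) (hu : u ≠ 0) (h1 : lam⁻¹ * mu⁻¹ + u⁻¹ ≠ 0) (h2 : lam - mu * u ≠ 0)
    (ψ : Fin N → Fin N → ℂ) :
    M2 N (Ksym N ℓ r lam mu u) *ᵥ (fun p => ψ p.1 p.2) = fun p =>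
      (((1 / ((u + lam * mu) * (lam - mu * u))) •
        opK2 lam mu u (cls N ℓ r) (sig N ℓ r) ψ) p.1 p.2 : ℂ) := by
  ext p
  rw [mulVec_of_sparse (f := fun p => kDiag lam mu u (cls N ℓ r p.2))
    (g := fun p => kOff lam mu u (cls N ℓ r p.2)) (τ := fun p => (p.1, sig N ℓ r p.2))
    (C := 1 / ((u + lam * mu) * (lam - mu * u)))]
  · rfl
  · intro p k
    rw [M2, kroneckerMap_apply, Ksym_apply N ℓ r hlr hr hlam hmu hu h1 h2, Matrix.one_apply]
    by_cases h : p.1 = k.1 <;> simp [Prod.ext_iff, h, eq_comm (a := k.1)]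

section Smul

variable {ι : Type*} (C q x y lam mu u : ℂ) (c : ι → Kind) (σ : ι → ι)
  (ψ : ι → ι → ℂ)

lemma opK1_smul : opK1 lam mu u c σ (C • ψ) = C • opK1 lam mu u c σ ψ := by
  ext i j
  simp only [opK1, Pi.smul_apply, smul_eq_mul]
  ring

lemma opK2_smul : opK2 lam mu u c σ (C • ψ) = C • opK2 lam mu u c σ ψ := by
  ext i j
  simp only [opK2, Pi.smul_apply, smul_eq_mul]
  ring

variable [LinearOrder ι]

lemma opR_smul : opR q x y (C • ψ) = C • opR q x y ψ := by
  ext i j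
  simp only [opR, Pi.smul_apply, smul_eq_mul]
  ring

lemma opR21_smul : opR21 q x y (C • ψ) = C • opR21 q x y ψ := by
  ext i j
  simp only [opR21, Pi.smul_apply, smul_eq_mul]
  ring

end Smul

/-! ### All pairs of indices -/

/-- The orbit of an index under `σ`, with its position in terms of 0-based values: a fixed point
of kind `D` or `M`, or a pair of a point `w` of kind `L` and a point `z` of kind `H`. -/
lemma orbit_cases (N ℓ r : ℕ) (hlr : ℓ < r) (hr : 2 * r ≤ N + ℓ) (i : Fin N) :
    (cls N ℓ r i = .D ∧ (i : ℕ) < ℓ) ∨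
    (cls N ℓ r i = .M ∧ r ≤ (i : ℕ) ∧ (i : ℕ) < N + ℓ - r) ∨
    ∃ w z : Fin N, (i = w ∨ i = z) ∧ (ℓ ≤ (w : ℕ) ∧ (w : ℕ) < r ∧ (z : ℕ) + w + 1 = N + ℓ) ∧
      cls N ℓ r w = .L ∧ cls N ℓ r z = .H ∧ sig N ℓ r w = z ∧ sig N ℓ r z = w := by
  have pair : ∀ a b : Fin N, (b : ℕ) + a + 1 = N + ℓ → ℓ ≤ (a : ℕ) → (a : ℕ) < r →
      cls N ℓ r a = .L ∧ cls N ℓ r b = .H ∧ sig N ℓ r a = b ∧ sig N ℓ r b = a := by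
    intro a b hab ha ha'
    rcases cls_sig_cases N ℓ r hr a with h | h | h | h <;>
    rcases cls_sig_cases N ℓ r hr b with h' | h' | h' | h' <;>
    first
    | omega
    | exact ⟨h.2.2.1, h'.2.1, Fin.ext (by omega), Fin.ext (by omega)⟩
  have hi := i.2
  rcases cls_sig_cases N ℓ r hr i with h | h | h | h
  · exact Or.inl ⟨h.2.1, h.1⟩
  · exact Or.inr (Or.inr ⟨i, sig N ℓ r i, Or.inl rfl, ⟨h.1, h.2.1, h.2.2.2⟩,
      pair _ _ h.2.2.2 h.1 h.2.1⟩)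
  · exact Or.inr (Or.inl ⟨h.2.2.1, h.1, h.2.1⟩)
  · exact Or.inr (Or.inr ⟨sig N ℓ r i, i, Or.inr rfl, ⟨by omega, by omega, by omega⟩,
      pair _ _ (by omega) (by omega) (by omega)⟩)

/-- The local equation holds at every pair of indices, by the possible relative positions of their
two `σ`-orbits. -/
lemma localRE_all (N ℓ r : ℕ) (hlr : ℓ < r) (hr : 2 * r ≤ N + ℓ) (q lam mu u v : ℂ)
    (ψ : Fin N → Fin N → ℂ) (i j : Fin N) :
    LocalRE q lam mu u v (cls N ℓ r) (sig N ℓ r) ψ i j := by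
  rcases orbit_cases N ℓ r hlr hr i with ⟨ci, hi⟩ | ⟨ci, hi, hi'⟩ |
    ⟨w, z, hi, ⟨hw, hw', hz⟩, cw, cz, sw, sz⟩ <;>
  rcases orbit_cases N ℓ r hlr hr j with ⟨cj, hj⟩ | ⟨cj, hj, hj'⟩ |
    ⟨x, y, hj, ⟨hx, hx', hy⟩, cx, cy, sx, sy⟩
  · rcases lt_trichotomy i j with h | rfl | h
    · exact (localRE_fixed h (Or.inl ⟨ci, cj⟩)).1
    · exact localRE_fixed_same (by rw [ci, kOff]) (by rw [ci, kOff])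
    · exact (localRE_fixed h (Or.inl ⟨cj, ci⟩)).2
  · exact (localRE_fixed (Fin.lt_def.2 (by omega)) (Or.inr (Or.inr ⟨ci, cj⟩))).1
  · have H := localRE_pair_low (q := q) (lam := lam) (mu := mu) (u := u) (v := v) (ψ := ψ)
      (d := i) (w := x) (z := y) (Fin.lt_def.2 (by omega)) (Fin.lt_def.2 (by omega)) ci cx cy sx sy
    rcases hj with rfl | rfl
    exacts [H.1.1, H.2.1]
  · exact (localRE_fixed (Fin.lt_def.2 (by omega)) (Or.inr (Or.inr ⟨cj, ci⟩))).2
  · rcases lt_trichotomy i j with h | rfl | h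
    · exact (localRE_fixed h (Or.inr (Or.inl ⟨ci, cj⟩))).1
    · exact localRE_fixed_same (by rw [ci, kOff]) (by rw [ci, kOff])
    · exact (localRE_fixed h (Or.inr (Or.inl ⟨cj, ci⟩))).2
  · have H := localRE_pair_mid (q := q) (lam := lam) (mu := mu) (u := u) (v := v) (ψ := ψ)
      (w := x) (m := i) (z := y) (Fin.lt_def.2 (by omega)) (Fin.lt_def.2 (by omega)) cx ci cy sx sy
    rcases hj with rfl | rfl
    exacts [H.1.2, H.2.1]
  · have H := localRE_pair_low (q := q) (lam := lam) (mu := mu) (u := u) (v := v) (ψ := ψ)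
      (d := j) (w := w) (z := z) (Fin.lt_def.2 (by omega)) (Fin.lt_def.2 (by omega)) cj cw cz sw sz
    rcases hi with rfl | rfl
    exacts [H.1.2, H.2.2]
  · have H := localRE_pair_mid (q := q) (lam := lam) (mu := mu) (u := u) (v := v) (ψ := ψ)
      (w := w) (m := j) (z := z) (Fin.lt_def.2 (by omega)) (Fin.lt_def.2 (by omega)) cw cj cz sw sz
    rcases hi with rfl | rfl
    exacts [H.1.1, H.2.2]
  · rcases lt_trichotomy (w : ℕ) x with h | h | h
    · have H := localRE_nested (q := q) (lam := lam) (mu := mu) (u := u) (v := v) (ψ := ψ)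
        (w := w) (x := x) (y := y) (z := z) (Fin.lt_def.2 h) (Fin.lt_def.2 (by omega))
        (Fin.lt_def.2 (by omega)) cw cx cy cz sw sz sx sy
      rcases hi with rfl | rfl <;> rcases hj with rfl | rfl
      exacts [H.1.1.1, H.1.2.1, H.2.1.1, H.2.2.1]
    · obtain rfl : w = x := Fin.ext h
      obtain rfl : z = y := Fin.ext (by omega)
      have H := localRE_pair (q := q) (lam := lam) (mu := mu) (u := u) (v := v) (ψ := ψ)
        (w := w) (z := z) (Fin.lt_def.2 (by omega)) cw cz sw sz
      rcases hi with rfl | rfl <;> rcases hj with rfl | rfl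
      exacts [H.1.1, H.1.2, H.2.1, H.2.2]
    · have H := localRE_nested (q := q) (lam := lam) (mu := mu) (u := u) (v := v) (ψ := ψ)
        (w := x) (x := w) (y := z) (z := y) (Fin.lt_def.2 h) (Fin.lt_def.2 (by omega))
        (Fin.lt_def.2 (by omega)) cx cw cz cy sx sy sw sz
      rcases hi with rfl | rfl <;> rcases hj with rfl | rfl
      exacts [H.1.1.2, H.2.1.2, H.1.2.2, H.2.2.2]

/-- the canonical symmetric solution satisfies the untwisted
reflection equation (RE) for all `u, v` for which all factors are defined. -/
theorem statement13 (N : ℕ) (hN : 2 ≤ N) (q : ℂ) (hq : q ≠ 0)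
    (ℓ r : ℕ) (hlr : ℓ < r) (hr : 2 * r ≤ N + ℓ)
    (lam mu : ℂ) (hlam : lam ≠ 0) (hmu : mu ≠ 0)
    (u v : ℂ) (hu : u ≠ 0) (hv : v ≠ 0)
    (h1 : u / v ≠ q ^ 2) (h2 : u / v ≠ q⁻¹ ^ 2)
    (h3 : u * v ≠ q ^ 2) (h4 : u * v ≠ q⁻¹ ^ 2)
    (hKu1 : lam⁻¹ * mu⁻¹ + u⁻¹ ≠ 0) (hKu2 : lam - mu * u ≠ 0)
    (hKv1 : lam⁻¹ * mu⁻¹ + v⁻¹ ≠ 0) (hKv2 : lam - mu * v ≠ 0) :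
    REeq N q (Ksym N ℓ r lam mu) u v := by

  rw [REeq]
  apply Matrix.mulVec_injective
  funext w
  obtain ⟨ψ, rfl⟩ : ∃ ψ : Fin N → Fin N → ℂ, w = fun p => ψ p.1 p.2 := ⟨Function.curry w, rfl⟩
  have huv : u * v ≠ 0 := mul_ne_zero hu hv
  have h3' : u * v / 1 ≠ q ^ 2 := by rwa [div_one]
  -- `u * v` is treated as the quotient `u * v / 1`, so that one formula covers both arguments of `R`.
  have eR := RBJ_mulVec N hq huv one_ne_zero h3'
  have eR21 := R21_mulVec N hq huv one_ne_zero h3'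
  rw [div_one] at eR eR21
  simp only [← Matrix.mulVec_mulVec, RBJ_mulVec N hq hu hv h1, R21_mulVec N hq hu hv h1, eR, eR21,
    M1_mulVec N ℓ r hlr hr hlam hmu hu hKu1 hKu2, M2_mulVec N ℓ r hlr hr hlam hmu hv hKv1 hKv2,
    opR_smul, opR21_smul, opK1_smul, opK2_smul]
  ext p
  have key := localRE_all N ℓ r hlr hr q lam mu u v ψ p.1 p.2
  rw [LocalRE] at key
  simp only [Pi.smul_apply, smul_eq_mul, key]
  ring

end
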